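/- Let M be a positive natural number, T > 0, N ∈ ℕ, and let ω : [0,T] → ℝ^M be integrable with ω(t) ∈ Σ_r^M for almost every t ∈ [0,T]. Then F_N(ω)(t) ∈ Σ_r^M for almost every t ∈ [0,T], where F_N acts coordinatewise. -/

import Mathlib

/-!
On a dyadic cell `[mT/2^n, (m+1)T/2^n)` the Haar partial sum through the levels `k < n` is the
average of `g` over that cell (`haar_partial_eq_average`). This goes by induction on `n`: at level
`n` the only Haar function not vanishing at `t` is the one supported on the level-`n` cell around
`t`, and adding its term replaces the average over the cell by the average over the half that
contains `t`. An average of simplex-valued functions is simplex-valued, because averaging is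
linear, monotone and preserves constants; the cells cover `[0,T)`, hence almost all of `[0,T]`.
-/

open MeasureTheory

/-- The mother Haar function on `[0,T]`: `1` on `[0,T/2)`, `-1` on `[T/2,T)`, `0` otherwise. -/
noncomputable def haarMother (T t : ℝ) : ℝ :=
  if 0 ≤ t ∧ t < T / 2 then 1 else if T / 2 ≤ t ∧ t < T then -1 else 0

/-- The Haar function `b_{k,j}(t) = b_{0,0}(2^k t - j T)` on `[0,T]`. -/
noncomputable def haarFn (T : ℝ) (k j : ℕ) (t : ℝ) : ℝ :=
  haarMother T (2 ^ k * t - j * T)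

/-- The Haar wavelet operator
`F_N(g)(t) = (1/T) ∫₀ᵀ g + ∑_{k=0}^{N} ∑_{j=0}^{2^k-1} (2^k/T) (∫₀ᵀ g b_{k,j}) b_{k,j}(t)`. -/
noncomputable def haarOp (T : ℝ) (N : ℕ) (g : ℝ → ℝ) (t : ℝ) : ℝ :=
  (1 / T) * (∫ s in (0:ℝ)..T, g s) +
    ∑ k ∈ Finset.range (N + 1), ∑ j ∈ Finset.range (2 ^ k),
      (2 ^ k / T) * (∫ s in (0:ℝ)..T, g s * haarFn T k j s) * haarFn T k j t

/-- The coefficient of a Haar function is the integral over the left half of its support minus the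
integral over the right half. -/
lemma integral_mul_haarFn (T : ℝ) (hT : 0 < T) (g : ℝ → ℝ) (hg : IntegrableOn g (Set.Icc 0 T))
    (n j : ℕ) (hj : j < 2 ^ n) :
    ∫ s in (0:ℝ)..T, g s * haarFn T n j s =
      (∫ s in Set.Ico (j * T / 2 ^ n) ((2 * j + 1) * T / 2 ^ (n + 1)), g s) -
        ∫ s in Set.Ico ((2 * j + 1) * T / 2 ^ (n + 1)) ((j + 1) * T / 2 ^ n), g s := by
  have hp : (0:ℝ) < 2 ^ n := by positivity
  have hj1 : (j:ℝ) + 1 ≤ 2 ^ n := by exact_mod_cast hj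
  have ha : 0 ≤ j * T / 2 ^ n := by positivity
  have hc : (2 * j + 1) * T / 2 ^ (n + 1) = j * T / 2 ^ n + T / 2 ^ n / 2 := by
    field_simp; ring
  have hb' : (j + 1) * T / 2 ^ n = j * T / 2 ^ n + T / 2 ^ n := by field_simp
  have hb : (j + 1) * T / 2 ^ n ≤ T := by
    rw [div_le_iff₀ hp]; nlinarith
  have hd : 0 < T / 2 ^ n := by positivity
  rw [hb'] at hb
  rw [hb', hc]
  set a := j * T / 2 ^ n with hadef
  set d := T / 2 ^ n with hddef
  have hTd : T = 2 ^ n * d := by rw [hddef]; field_simp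
  have hja : j * T = 2 ^ n * a := by rw [hadef]; field_simp
  have key : ∀ s, g s * haarFn T n j s =
      (Set.Ico a (a + d / 2)).indicator g s - (Set.Ico (a + d / 2) (a + d)).indicator g s := by
    intro s
    have e1 : 0 ≤ 2 ^ n * s - j * T ↔ a ≤ s := by
      rw [hja, ← mul_sub, mul_nonneg_iff_of_pos_left hp, sub_nonneg]
    have e2 : 2 ^ n * s - j * T < T / 2 ↔ s < a + d / 2 := by
      rw [hja, hTd, ← mul_sub, mul_div_assoc, mul_lt_mul_iff_right₀ hp, sub_lt_iff_lt_add']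
    have e3 : 2 ^ n * s - j * T < T ↔ s < a + d := by
      rw [hja]; conv_lhs => rw [hTd]
      rw [← mul_sub, mul_lt_mul_iff_right₀ hp, sub_lt_iff_lt_add']
    have e4 : T / 2 ≤ 2 ^ n * s - j * T ↔ a + d / 2 ≤ s := by
      rw [← not_lt, e2, not_lt]
    simp only [haarFn, haarMother, e1, e2, e3, e4, Set.indicator, Set.mem_Ico]
    split_ifs <;> first | (exfalso; grind) | simp
  have hg' : IntegrableOn g (Set.Ico 0 T) := hg.mono_set Set.Ico_subset_Icc_self
  rw [intervalIntegral.integral_of_le hT.le, ← integral_Ico_eq_integral_Ioc]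
  simp_rw [key]
  rw [integral_sub (hg'.indicator measurableSet_Ico) (hg'.indicator measurableSet_Ico),
    setIntegral_indicator measurableSet_Ico, setIntegral_indicator measurableSet_Ico,
    Set.inter_eq_right.2 (Set.Ico_subset_Ico ha (by linarith)),
    Set.inter_eq_right.2 (Set.Ico_subset_Ico (by linarith) hb)]

/-- The value of a Haar function at a point of the level-`n + 1` cell with index `m`: the sign
records whether that cell is the left or the right half of its parent, and every Haar function
attached to another level-`n` cell vanishes there. -/
lemma haarFn_eq (T : ℝ) (hT : 0 < T) (n m j : ℕ) (t : ℝ)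
    (h1 : m * T ≤ 2 ^ (n + 1) * t) (h2 : 2 ^ (n + 1) * t < (m + 1) * T) :
    haarFn T n j t = if m = 2 * j then 1 else if m = 2 * j + 1 then -1 else 0 := by
  rw [pow_succ] at h1 h2
  unfold haarFn haarMother
  have lo : ∀ r : ℕ, r ≤ m → r * T ≤ 2 ^ n * 2 * t := fun r hr =>
    le_trans (by gcongr) h1
  have hi : ∀ r : ℕ, m < r → 2 ^ n * 2 * t < r * T := fun r hr =>
    lt_of_lt_of_le h2 (by gcongr; exact_mod_cast hr)
  rcases lt_or_ge m (2 * j) with h | h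
  · have := hi _ h
    push_cast at this
    rw [if_neg (by rintro ⟨h3, -⟩; linarith), if_neg (by rintro ⟨h3, -⟩; linarith),
      if_neg (by omega), if_neg (by omega)]
  have l1 := lo _ h
  push_cast at l1
  rcases lt_or_ge m (2 * j + 1) with h' | h'
  · have := hi _ h'
    push_cast at this
    rw [if_pos ⟨by linarith, by linarith⟩, if_pos (by omega)]
  have l2 := lo _ h'
  push_cast at l2
  rw [if_neg (by rintro ⟨-, h3⟩; linarith), if_neg (by omega : ¬ m = 2 * j)]
  rcases lt_or_ge m (2 * j + 2) with h'' | h''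
  · have := hi _ h''
    push_cast at this
    rw [if_pos ⟨by linarith, by linarith⟩, if_pos (by omega)]
  · have := lo _ h''
    push_cast at this
    rw [if_neg (by rintro ⟨-, h3⟩; linarith), if_neg (by omega)]

/-- The Haar partial sum through the levels `k < n` is, on each dyadic cell of level `n`, the
average of `g` over that cell. -/
lemma haar_partial_eq_average (T : ℝ) (hT : 0 < T) (g : ℝ → ℝ)
    (hg : IntegrableOn g (Set.Icc 0 T)) (t : ℝ) (n : ℕ) :
    ∀ m : ℕ, m < 2 ^ n → m * T ≤ 2 ^ n * t → 2 ^ n * t < (m + 1) * T →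
    (1 / T) * (∫ s in (0:ℝ)..T, g s) +
      ∑ k ∈ Finset.range n, ∑ j ∈ Finset.range (2 ^ k),
        (2 ^ k / T) * (∫ s in (0:ℝ)..T, g s * haarFn T k j s) * haarFn T k j t =
      (2 ^ n / T) * ∫ s in Set.Ico (m * T / 2 ^ n) ((m + 1) * T / 2 ^ n), g s := by
  induction n with
  | zero =>
    intro m hm _ _
    obtain rfl : m = 0 := by simpa using hm
    simp [intervalIntegral.integral_of_le hT.le, integral_Ico_eq_integral_Ioc]
  | succ n ih =>
    intro m hm h1 h2
    have hp : (0:ℝ) < 2 ^ n := by positivity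
    have hjm : m = 2 * (m / 2) ∨ m = 2 * (m / 2) + 1 := by omega
    generalize m / 2 = j at hjm
    have hj : j < 2 ^ n := by rw [pow_succ] at hm; omega
    have hj1 : (j:ℝ) + 1 ≤ 2 ^ n := by exact_mod_cast hj
    have hlo : (2 * j : ℝ) ≤ m := by exact_mod_cast (by omega : 2 * j ≤ m)
    have hhi : (m : ℝ) ≤ 2 * j + 1 := by exact_mod_cast (by omega : m ≤ 2 * j + 1)
    have p1 : j * T ≤ 2 ^ n * t := by rw [pow_succ] at h1; nlinarith
    have p2 : 2 ^ n * t < (j + 1) * T := by rw [pow_succ] at h2; nlinarith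
    have hsum := Finset.sum_eq_single_of_mem (f := fun j' : ℕ =>
        (2 ^ n / T) * (∫ s in (0:ℝ)..T, g s * haarFn T n j' s) * haarFn T n j' t)
        j (Finset.mem_range.2 hj) (by
      intro j' _ hne
      rw [haarFn_eq T hT n m j' t h1 h2, if_neg (by omega), if_neg (by omega), mul_zero])
    rw [Finset.sum_range_succ, ← add_assoc, ih j hj p1 p2, hsum,
      integral_mul_haarFn T hT g hg n j hj, haarFn_eq T hT n m j t h1 h2]
    have hle1 : j * T / 2 ^ n ≤ (2 * j + 1) * T / 2 ^ (n + 1) := by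
      rw [pow_succ, div_le_div_iff₀ hp (by positivity)]
      nlinarith [mul_pos hT hp]
    have hle2 : (2 * j + 1) * T / 2 ^ (n + 1) ≤ (j + 1) * T / 2 ^ n := by
      rw [pow_succ, div_le_div_iff₀ (by positivity) hp]
      nlinarith [mul_pos hT hp]
    have ha : 0 ≤ j * T / 2 ^ n := by positivity
    have hb : (j + 1) * T / 2 ^ n ≤ T := by
      rw [div_le_iff₀ hp]; nlinarith
    have hsplit : ∫ s in Set.Ico (j * T / 2 ^ n) ((j + 1) * T / 2 ^ n), g s =
        (∫ s in Set.Ico (j * T / 2 ^ n) ((2 * j + 1) * T / 2 ^ (n + 1)), g s) +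
        ∫ s in Set.Ico ((2 * j + 1) * T / 2 ^ (n + 1)) ((j + 1) * T / 2 ^ n), g s := by
      rw [← Set.Ico_union_Ico_eq_Ico hle1 hle2]
      refine setIntegral_union ?_ measurableSet_Ico (hg.mono_set ?_) (hg.mono_set ?_)
      · exact Set.Ico_disjoint_Ico_same
      · exact fun x hx => ⟨by linarith [hx.1], by linarith [hx.2]⟩
      · exact fun x hx => ⟨by linarith [hx.1], by linarith [hx.2]⟩
    rw [hsplit]
    rcases hjm with rfl | rfl
    · have e : ((2 * j : ℕ) : ℝ) * T / 2 ^ (n + 1) = j * T / 2 ^ n := by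
        push_cast; field_simp; ring
      rw [if_pos rfl, e]
      push_cast
      ring
    · have e : (((2 * j + 1 : ℕ) : ℝ) + 1) * T / 2 ^ (n + 1) = (j + 1) * T / 2 ^ n := by
        push_cast; field_simp; ring
      rw [if_neg (by omega), if_pos rfl, e]
      push_cast
      ring

/-- If `ω : [0,T] → ℝ^M` is integrable and takes values in the simplex
`Σ_r^M` almost everywhere, then the coordinatewise Haar wavelet approximation
`F_N(ω)` also takes values in `Σ_r^M` almost everywhere on `[0,T]`. -/
theorem stmt8 (M : ℕ) (hM : 0 < M) (T : ℝ) (hT : 0 < T) (N : ℕ)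
    (ω : ℝ → Fin M → ℝ)
    (hint : ∀ i : Fin M, IntegrableOn (fun t => ω t i) (Set.Icc 0 T))
    (hω : ∀ᵐ t ∂(volume.restrict (Set.Icc (0:ℝ) T)),
      ∑ i, ω t i = 1 ∧ ∀ i, ω t i ∈ Set.Icc (0:ℝ) 1) :
    ∀ᵐ t ∂(volume.restrict (Set.Icc (0:ℝ) T)),
      (∑ i, haarOp T N (fun s => ω s i) t) = 1 ∧
      ∀ i, haarOp T N (fun s => ω s i) t ∈ Set.Icc (0:ℝ) 1 := by
  -- The right endpoint `t = T` lies in no cell (every Haar function vanishes there); it is null.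
  have hmem : ∀ᵐ t ∂(volume.restrict (Set.Icc (0:ℝ) T)), t ∈ Set.Ico 0 T := by
    rw [← restrict_Ico_eq_restrict_Icc]
    exact ae_restrict_mem measurableSet_Ico
  filter_upwards [hmem] with t ht
  have hp : (0:ℝ) < 2 ^ (N + 1) := by positivity
  have hq : 0 ≤ 2 ^ (N + 1) * t / T := div_nonneg (mul_nonneg hp.le ht.1) hT.le
  obtain ⟨m, hm⟩ : ∃ m, m = ⌊2 ^ (N + 1) * t / T⌋₊ := ⟨_, rfl⟩
  have h1 : m * T ≤ 2 ^ (N + 1) * t := by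
    rw [← le_div_iff₀ hT, hm]; exact Nat.floor_le hq
  have h2 : 2 ^ (N + 1) * t < (m + 1) * T := by
    rw [← div_lt_iff₀ hT, hm]; exact Nat.lt_floor_add_one _
  have hmN : m < 2 ^ (N + 1) := by
    have : (m : ℝ) < 2 ^ (N + 1) := by
      by_contra! h
      nlinarith [ht.2]
    exact_mod_cast this
  have hop : ∀ i, haarOp T N (fun s => ω s i) t = (2 ^ (N + 1) / T) *
      ∫ s in Set.Ico (m * T / 2 ^ (N + 1)) ((m + 1) * T / 2 ^ (N + 1)), ω s i := fun i =>
    haar_partial_eq_average T hT _ (hint i) t (N + 1) m hmN h1 h2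
  have hsub : Set.Ico (m * T / 2 ^ (N + 1)) ((m + 1) * T / 2 ^ (N + 1)) ⊆ Set.Icc 0 T := by
    have hm1 : (m:ℝ) + 1 ≤ 2 ^ (N + 1) := by exact_mod_cast hmN
    have hb : (m + 1) * T / 2 ^ (N + 1) ≤ T := by
      rw [div_le_iff₀ hp]; nlinarith
    have ha : 0 ≤ m * T / 2 ^ (N + 1) := by positivity
    exact fun x hx => ⟨by linarith [hx.1], by linarith [hx.2]⟩
  have hone : (2 ^ (N + 1) / T) *
      ∫ _ in Set.Ico (m * T / 2 ^ (N + 1)) ((m + 1) * T / 2 ^ (N + 1)), (1:ℝ) = 1 := by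
    have e : (m + 1) * T / 2 ^ (N + 1) - m * T / 2 ^ (N + 1) = T / 2 ^ (N + 1) := by ring
    have : 0 ≤ T / 2 ^ (N + 1) := by positivity
    rw [setIntegral_const, measureReal_def, Real.volume_Ico, e, ENNReal.toReal_ofReal this]
    simp only [smul_eq_mul]
    field_simp
  simp only [hop]
  have hω' := ae_restrict_of_ae_restrict_of_subset hsub hω
  have hnn : ∀ i, 0 ≤ (2 ^ (N + 1) / T) *
      ∫ s in Set.Ico (m * T / 2 ^ (N + 1)) ((m + 1) * T / 2 ^ (N + 1)), ω s i := fun i =>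
    mul_nonneg (by positivity)
      (integral_nonneg_of_ae (hω'.mono fun s hs => (hs.2 i).1))
  have hs1 : ∑ i, (2 ^ (N + 1) / T) *
      ∫ s in Set.Ico (m * T / 2 ^ (N + 1)) ((m + 1) * T / 2 ^ (N + 1)), ω s i = 1 := by
    rw [← Finset.mul_sum, ← integral_finsetSum _ fun i _ => (hint i).mono_set hsub,
      integral_congr_ae (hω'.mono fun s hs => hs.1), hone]
  refine ⟨hs1, fun i => ⟨hnn i, ?_⟩⟩
  exact (Finset.single_le_sum (fun i _ => hnn i) (Finset.mem_univ i)).trans_eq hs1
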